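/- The corrected BFO rule solves the parity problem: for every cyclic binary configuration x of odd length, there exists t_0 ≥ 0 such that for all t ≥ t_0, F^t(x) is the all-1s configuration if Par(x) = 1 and the all-0s configuration if Par(x) = 0. -/

import Mathlib

/-- The parity (XOR of all cells) of a cyclic binary configuration. -/
def Par {n : ℕ} [NeZero n] (x : ZMod n → Bool) : ZMod 2 :=
  ∑ i : ZMod n, if x i then 1 else 0

/-- The global CA rule induced by a local rule of radius `r`
on cyclic configurations of length `n`. -/
def globalRule (r : ℕ) (f : (Fin (2*r+1) → Bool) → Bool) {n : ℕ}
    (x : ZMod n → Bool) : ZMod n → Bool :=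
  fun i => f (fun j => x (i + ((j : ℕ) : ZMod n) - (r : ZMod n)))

/-- The active (center-flipping) neighbourhoods of the corrected BFO rule
(transitions T1–T12; the center is cell 4 of 9). -/
def bfoActive (w : Fin 9 → Bool) : Bool :=
  (w 1 && w 2 && w 3 && !w 4 && !w 5) ||               -- T1
  (w 0 && w 1 && w 2 && !w 3 && !w 4) ||               -- T2
  (!w 1 && !w 2 && w 3 && !w 4 && !w 5) ||             -- T3
  (!w 0 && !w 1 && w 2 && !w 3 && !w 4) ||             -- T4
  (!w 3 && w 4 && w 5 && !w 6) ||                      -- T5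
  (!w 2 && w 3 && w 4 && !w 5) ||                      -- T6
  (!w 1 && !w 2 && w 3 && !w 4 && w 5 && !w 6) ||      -- T7
  (!w 2 && !w 3 && w 4 && !w 5 && w 6 && !w 7) ||      -- T8
  (w 3 && w 4 && w 5 && !w 6 && w 7) ||                -- T9
  (w 0 && w 1 && w 2 && !w 3 && w 4 && !w 5) ||        -- T10
  (w 0 && w 1 && w 2 && !w 3 && w 4 && w 5 && w 6) ||  -- T11
  (w 2 && w 3 && w 4 && !w 5 && w 6 && w 7 && !w 8)    -- T12

/-- The corrected BFO local rule (radius 4). -/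
def bfoLocal (w : Fin 9 → Bool) : Bool := xor (bfoActive w) (w 4)

/-- The global rule induced by the corrected BFO rule. -/
def bfoGlobal {n : ℕ} (x : ZMod n → Bool) : ZMod n → Bool :=
  globalRule 4 bfoLocal x

/-- `x i x (i+1)` is a box: the pattern 01 preceded by 1 and followed by 00. -/
def IsBox {n : ℕ} (x : ZMod n → Bool) (i : ZMod n) : Prop :=
  x (i-1) = true ∧ x i = false ∧ x (i+1) = true ∧ x (i+2) = false ∧ x (i+3) = false

/-- Cell `j` belongs to some box of `x`. -/
def InBox {n : ℕ} (x : ZMod n → Bool) (j : ZMod n) : Prop :=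
  ∃ i, IsBox x i ∧ (j = i ∨ j = i + 1)

/-- `x` has a switch at position `i`: either a b-switch (a box at `i+1`)
or an r-switch (`x i ≠ x (i+1)` with neither cell in a box). -/
def IsSwitch {n : ℕ} (x : ZMod n → Bool) (i : ZMod n) : Prop :=
  IsBox x (i+1) ∨ (x i ≠ x (i+1) ∧ ¬ InBox x i ∧ ¬ InBox x (i+1))

/-- The number of switches of the configuration `x`. -/
noncomputable def switchCount {n : ℕ} (x : ZMod n → Bool) : ℕ :=
  Nat.card {i : ZMod n // IsSwitch x i}

/-- The block of length `2k+2` starting at position `i` is an ordered block. -/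
def IsOrderedBlock {n : ℕ} (x : ZMod n → Bool) (i : ZMod n) (k : ℕ) : Prop :=
  (∀ j ≤ k, ¬ (x (i + 2*j) = true ∧ x (i + 2*j + 1) = false)) ∧
  (x i = false ∧ x (i+1) = true) ∧
  ¬ (x (i + 2*k) = false ∧ x (i + 2*k + 1) = true) ∧
  (x (i + 2*k) = true ∧ x (i + 2*k + 1) = true → x (i + 2*k + 2) = false)

/-- An ordered block which is not a proper sub-block of another ordered block. -/
def IsMaximalOrderedBlock {n : ℕ} (x : ZMod n → Bool) (i : ZMod n) (k : ℕ) : Prop :=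
  IsOrderedBlock x i k ∧
  ∀ (i' : ZMod n) (k' d : ℕ), IsOrderedBlock x i' k' →
    i = i' + 2*d → 2*d + 2*k + 2 ≤ 2*k' + 2 → d = 0 ∧ k = k'

/-- `x` contains the word `w` starting at position `i`. -/
def ContainsAt {n : ℕ} (x : ZMod n → Bool) (i : ZMod n) (w : List Bool) : Prop :=
  ∀ j : Fin w.length, x (i + ((j : ℕ) : ZMod n)) = w.get j

/-- `x` belongs to `X_s`: the switch count is constant during the whole evolution
under the corrected BFO rule. -/
def InXs {n : ℕ} (x : ZMod n → Bool) : Prop :=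
  ∀ t : ℕ, switchCount (bfoGlobal^[t] x) = switchCount x

/-- Membership of the neighbourhood of cell `i` in one of the AT pairs
`T_{1,2}`, `T_{3,4}` (center at `i`). -/
def MatchT1234 {n : ℕ} (y : ZMod n → Bool) (i : ZMod n) : Prop :=
  (y (i-3) = true ∧ y (i-2) = true ∧ y (i-1) = true ∧ y i = false ∧ y (i+1) = false) ∨
  (y (i-4) = true ∧ y (i-3) = true ∧ y (i-2) = true ∧ y (i-1) = false ∧ y i = false) ∨
  (y (i-3) = false ∧ y (i-2) = false ∧ y (i-1) = true ∧ y i = false ∧ y (i+1) = false) ∨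
  (y (i-4) = false ∧ y (i-3) = false ∧ y (i-2) = true ∧ y (i-1) = false ∧ y i = false)

/-- The `k`-fold concatenation of a configuration of length `n`. -/
def concatK {n : ℕ} (k : ℕ) (x : ZMod n → Bool) : ZMod (k*n) → Bool :=
  fun i => x ((i.val : ZMod n))

namespace BFO

/-- Center-flipping condition on nine bits. -/
def act (a b c d e f g h i : Bool) : Bool :=
  (b && c && d && !e && !f) ||
  (a && b && c && !d && !e) ||
  (!b && !c && d && !e && !f) ||
  (!a && !b && c && !d && !e) ||
  (!d && e && f && !g) ||
  (!c && d && e && !f) ||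
  (!b && !c && d && !e && f && !g) ||
  (!c && !d && e && !f && g && !h) ||
  (d && e && f && !g && h) ||
  (a && b && c && !d && e && !f) ||
  (a && b && c && !d && e && f && g) ||
  (c && d && e && !f && g && h && !i)

/-- The rule on nine bits. -/
def loc (a b c d e f g h i : Bool) : Bool := xor (act a b c d e f g h i) e

/-- The global rule, with positions in an arbitrary ring. -/
def step {R : Type*} [CommRing R] (x : R → Bool) (i : R) : Bool :=
  loc (x (i-4)) (x (i-3)) (x (i-2)) (x (i-1)) (x i) (x (i+1)) (x (i+2)) (x (i+3)) (x (i+4))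

/-- Left switch on five bits, between the second and the third one. -/
def lsw (a b c d e : Bool) : Bool := !b && c && !(a && !d && !e)

/-- Left switch at position `q`. -/
def LS {R : Type*} [CommRing R] (x : R → Bool) (q : R) : Bool :=
  lsw (x (q-1)) (x q) (x (q+1)) (x (q+2)) (x (q+3))

/-- Displacement of a left switch during one step. -/
def disp (a b c d e f g h i j : Bool) : ℕ :=
  cond ((a && b && c && !d && e && !f && g && !h && !i) ||
    (a && b && c && !d && e && f && g && !h && i)) 2 <|
  cond ((a && b && c && !d && e && f && g) || (!c && !d && e && !f && g && !h)) 1 <|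
  cond (!d && e && f && !g && h && !i && !j) 3 0

/-- Displacement at position `q`. -/
def DS {R : Type*} [CommRing R] (x : R → Bool) (q : R) : ℕ :=
  disp (x (q-3)) (x (q-2)) (x (q-1)) (x q) (x (q+1)) (x (q+2)) (x (q+3)) (x (q+4)) (x (q+5))
    (x (q+6))

theorem track_bits : ∀ a b c d e f g h i j k l m : Bool,
    lsw (loc a b c d e f g h i) (loc b c d e f g h i j) (loc c d e f g h i j k)
      (loc d e f g h i j k l) (loc e f g h i j k l m) = true →
    (lsw e f g h i = true ∧ disp c d e f g h i j k l = 0) ∨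
    (lsw d e f g h = true ∧ disp b c d e f g h i j k = 1) ∨
    (lsw c d e f g = true ∧ disp a b c d e f g h i j = 2) ∨
    (lsw b c d e f = true ∧
      ∀ z, disp z a b c d e f g h i = 3) := by
  decide +kernel

/-- Windows of a configuration are configurations on the integers. -/
theorem step_shift {R : Type*} [CommRing R] (x : R → Bool) (p : R) (c : ℤ) :
    step (fun c : ℤ => x (p + (c : R))) c = step x (p + (c : R)) := by
  simp only [step]; push_cast; simp only [add_sub_assoc, add_assoc]

theorem LS_shift {R : Type*} [CommRing R] (x : R → Bool) (p : R) (c : ℤ) :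
    LS (fun c : ℤ => x (p + (c : R))) c = LS x (p + (c : R)) := by
  simp only [LS]; push_cast; simp only [add_sub_assoc, add_assoc]

theorem DS_shift {R : Type*} [CommRing R] (x : R → Bool) (p : R) (c : ℤ) :
    DS (fun c : ℤ => x (p + (c : R))) c = DS x (p + (c : R)) := by
  simp only [DS]; push_cast; simp only [add_sub_assoc, add_assoc]

theorem track_int (w : ℤ → Bool) (h : LS (step w) 0 = true) :
    ∃ d : ℕ, LS w (-(d:ℤ)) = true ∧ DS w (-(d:ℤ)) = d := by
  have h1 := track_bits (w (-5)) (w (-4)) (w (-3)) (w (-2)) (w (-1)) (w 0) (w 1) (w 2) (w 3) (w 4)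
    (w 5) (w 6) (w 7)
  have h2 := h1 (by simpa [LS, step] using h)
  rcases h2 with h2 | h2 | h2 | h2
  · exact ⟨0, by simpa [LS] using h2.1, by simpa [DS] using h2.2⟩
  · exact ⟨1, by simpa [LS] using h2.1, by simpa [DS] using h2.2⟩
  · exact ⟨2, by simpa [LS] using h2.1, by simpa [DS] using h2.2⟩
  · exact ⟨3, by simpa [LS] using h2.1, by simpa [DS] using h2.2 _⟩

theorem track {R : Type*} [CommRing R] (x : R → Bool) (p : R) (h : LS (step x) p = true) :
    ∃ q : R, LS x q = true ∧ q + (DS x q : R) = p := by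
  have key := track_int (fun c : ℤ => x (p + (c : R))) (by
    have h1 : step (fun c : ℤ => x (p + (c : R))) = fun c : ℤ => step x (p + (c : R)) :=
      funext (step_shift x p)
    rw [h1, LS_shift]; simpa using h)
  obtain ⟨d, h1, h2⟩ := key
  rw [LS_shift] at h1
  rw [DS_shift] at h2
  exact ⟨_, h1, by rw [h2]; push_cast; ring⟩

/-- The number of left switches. -/
def kount {n : ℕ} [NeZero n] (x : ZMod n → Bool) : ℕ :=
  (Finset.univ.filter (fun q => LS x q = true)).card

theorem kount_le {n : ℕ} [NeZero n] (x : ZMod n → Bool) : kount (step x) ≤ kount x := by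
  classical
  unfold kount
  refine le_trans (Finset.card_le_card (t := (Finset.univ.filter (fun q => LS x q = true)).image
    (fun q => q + (DS x q : ZMod n))) ?_) Finset.card_image_le
  intro p hp
  obtain ⟨q, h1, h2⟩ := track x p (by simpa using hp)
  exact Finset.mem_image.2 ⟨q, by simpa using h1, h2⟩

theorem kount_lt {n : ℕ} [NeZero n] (x : ZMod n → Bool) (q : ZMod n) (hq : LS x q = true)
    (h : LS (step x) (q + (DS x q : ZMod n)) ≠ true) : kount (step x) < kount x := by
  classical
  unfold kount
  have hm : q ∈ Finset.univ.filter (fun q => LS x q = true) := by simpa using hq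
  refine lt_of_le_of_lt (le_trans (Finset.card_le_card
    (t := ((Finset.univ.filter (fun q => LS x q = true)).erase q).image
    (fun q => q + (DS x q : ZMod n))) ?_) Finset.card_image_le) (Finset.card_erase_lt_of_mem hm)
  intro p hp
  have hp' : LS (step x) p = true := by simpa using hp
  obtain ⟨q', h1, h2⟩ := track x p hp'
  refine Finset.mem_image.2 ⟨q', Finset.mem_erase.2 ⟨?_, by simpa using h1⟩, h2⟩
  rintro rfl
  rw [← h2] at hp'
  exact absurd hp' h


/-- Adjacent pair flips at `i` and `i+1`, as a function of the cells `i-3, …, i+5`. -/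
def prA (b c d e f g h i j : Bool) : Bool :=
  (b && c && d && !e && !f) || (!b && !c && d && !e && !f) || (!d && e && f && !g) ||
  (!c && !d && e && !f && g && !h) || (d && e && f && !g && h && i && !j)

/-- Flips at `i` and `i+3`, as a function of the cells `i-1, …, i+5`. -/
def prB (a b c d e f g : Bool) : Bool := a && b && c && !d && e && (!f || (f && g))

theorem pair_bits : ∀ a b c d e f g h i j : Bool,
    act a b c d e f g h i =
      xor (xor (prA b c d e f g h i j) (prA a b c d e f g h i))
        (xor (prB d e f g h i j) (prB a b c d e f g)) := by
  decide +kernel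

/-- Bits as elements of `ZMod 2`. -/
def bit2 (b : Bool) : ZMod 2 := if b then 1 else 0

theorem bit2_xor : ∀ a b : Bool, bit2 (xor a b) = bit2 a + bit2 b := by decide

theorem Par_step {n : ℕ} [NeZero n] (x : ZMod n → Bool) : Par (step x) = Par x := by
  let A : ZMod n → Bool := fun i => prA (x (i-3)) (x (i-2)) (x (i-1)) (x i) (x (i+1)) (x (i+2))
    (x (i+3)) (x (i+4)) (x (i+5))
  let B : ZMod n → Bool := fun i => prB (x (i-1)) (x i) (x (i+1)) (x (i+2)) (x (i+3)) (x (i+4))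
    (x (i+5))
  have h : ∀ i, step x i = xor (xor (xor (A i) (A (i-1))) (xor (B i) (B (i-3)))) (x i) := by
    intro i
    have e : ∀ c d : ZMod n, i - c + d = i + (d - c) := fun c d => by ring
    have e' : ∀ c d : ZMod n, i - c - d = i - (c + d) := fun c d => by ring
    simp only [step, loc, A, B]
    rw [pair_bits _ _ _ _ _ _ _ _ _ (x (i+5))]
    simp only [e, e']
    norm_num
    simp only [← sub_eq_add_neg]
  have hA : ∑ i, bit2 (A (i-1)) = ∑ i, bit2 (A i) :=
    (Equiv.subRight (1 : ZMod n)).sum_comp (fun i => bit2 (A i))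
  have hB : ∑ i, bit2 (B (i-3)) = ∑ i, bit2 (B i) :=
    (Equiv.subRight (3 : ZMod n)).sum_comp (fun i => bit2 (B i))
  have h2 : ∀ a : ZMod 2, a + a = 0 := by decide
  change ∑ i, bit2 (step x i) = ∑ i, bit2 (x i)
  simp only [h, bit2_xor, Finset.sum_add_distrib, hA, hB, h2, zero_add]

theorem bfoGlobal_eq {n : ℕ} (x : ZMod n → Bool) : bfoGlobal x = step x := by
  funext i
  simp only [bfoGlobal, globalRule, bfoLocal, bfoActive, step, loc, act]
  have e : ∀ c d : ZMod n, i + c - d = i + (c - d) := fun c d => by ring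
  simp only [e]
  norm_num
  simp [← sub_eq_add_neg]

end BFO

namespace BFO

/-- Stable configurations on the integers: odd period, all left switches survive. -/
structure St (n : ℕ) (y : ℤ → Bool) : Prop where
  odd : Odd n
  per : ∀ i, y (i + n) = y i
  tr : ∀ t q, LS (step^[t] y) q = true →
    LS (step^[t+1] y) (q + (DS (step^[t] y) q : ℤ)) = true

theorem St.next {n : ℕ} {y : ℤ → Bool} (h : St n y) : St n (step y) where
  odd := h.odd
  per := by
    intro i
    have e : ∀ c : ℤ, i + n - c = i - c + n := fun c => by ring
    have e' : ∀ c : ℤ, i + n + c = i + c + n := fun c => by ring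
    simp only [step, e, e', h.per]
  tr := fun t q => h.tr (t+1) q

theorem St.tr0 {n : ℕ} {y : ℤ → Bool} (h : St n y) (q : ℤ) (hq : LS y q = true) :
    LS (step y) (q + (DS y q : ℤ)) = true := h.tr 0 q hq

theorem N2 {n : ℕ} {y : ℤ → Bool} (h : St n y) (q : ℤ) (h0 : y q = false) (h1 : y (q+1) = true)
    (h2 : y (q+2) = true) (h3 : y (q+3) = false) :
    y (q+4) = true ∧ y (q+5) = false ∧ y (q+6) = false := by
  by_contra hc
  have hL : LS y q = true := by simp [LS, lsw, *]
  have hD : DS y q = 0 := by grind [DS, disp]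
  have h4 := h.tr0 q hL
  rw [hD] at h4
  have h5 : step y (q+1) = false := by grind [step, loc, act]
  grind [LS, lsw]

theorem N3 {n : ℕ} {y : ℤ → Bool} (h : St n y) (q : ℤ) (h0 : y q = false) (h1 : y (q+1) = false)
    (h2 : y (q+2) = true) (h3 : y (q+3) = false) (h4 : y (q+4) = true) (h5 : y (q+5) = false) :
    False := by
  have f1 : step y (q+2) = false := by grind [step, loc, act]
  have f2 : step y (q+3) = true := by grind [step, loc, act]
  have f3 : step y (q+4) = true := by grind [step, loc, act]
  have f4 : step y (q+5) = false := by grind [step, loc, act]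
  have f5 : y (q+6) = false → step y (q+6) = false := by grind [step, loc, act]
  by_cases h6 : y (q+6) = true
  · have hL : LS y (q+3) = true := by grind [LS, lsw]
    have hD : DS y (q+3) = 0 := by grind [DS, disp]
    have := h.tr0 _ hL
    rw [hD] at this
    grind [LS, lsw]
  · have := N2 h.next (q+2) (by grind) (by grind) (by grind) (by grind)
    grind

theorem N4 {n : ℕ} {y : ℤ → Bool} (h : St n y) (q : ℤ) (g1 : y (q-3) = true) (g2 : y (q-2) = true)
    (g3 : y (q-1) = true) (h0 : y q = false) (h1 : y (q+1) = true)
    (h2 : y (q+2) = false) (h3 : y (q+3) = true) :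
    y (q+4) = false ∧ y (q+5) = false := by
  by_contra hc
  have hL : LS y q = true := by grind [LS, lsw]
  have hD : DS y q = 0 := by grind [DS, disp]
  have h4 := h.tr0 q hL
  rw [hD] at h4
  have h5 : step y (q+1) = false := by grind [step, loc, act]
  grind [LS, lsw]

theorem N5 {n : ℕ} {y : ℤ → Bool} (h : St n y) (p : ℤ) (h0 : y p = true) (h1 : y (p+1) = false)
    (h2 : y (p+2) = true) (h3 : y (p+3) = false) (h4 : y (p+4) = true) :
    y (p+5) = false ∧ y (p+6) = false := by
  by_contra hc
  have key : ∀ j : ℕ, y (p-2*j) = true ∧ y (p-2*j+1) = false ∧ y (p-2*j+2) = true ∧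
      y (p-2*j+3) = false ∧ y (p-2*j+4) = true ∧
      ¬ (y (p-2*j+5) = false ∧ y (p-2*j+6) = false) := by
    intro j
    induction j with
    | zero => simp [*]
    | succ j ih =>
      have e : p - 2 * ((j+1 : ℕ) : ℤ) = (p - 2*j) - 2 := by push_cast; ring
      rw [e]
      generalize p - 2 * (j : ℤ) = r at ih
      obtain ⟨i0, i1, i2, i3, i4, i5⟩ := ih
      have c1 : ¬ (y (r-2) = false ∧ y (r-1) = false) := by
        rintro ⟨c1, c2⟩
        exact N3 h (r-2) (by grind) (by grind) (by grind) (by grind) (by grind) (by grind)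
      have c2 : ¬ (y (r-2) = false ∧ y (r-1) = true) := by
        rintro ⟨c1, c2⟩
        have := N2 h (r-2) (by grind) (by grind) (by grind) (by grind)
        grind
      have c3 : ¬ (y (r-2) = true ∧ y (r-1) = true) := by
        rintro ⟨c1, c2⟩
        have := N4 h (r+1) (by grind) (by grind) (by grind) (by grind) (by grind) (by grind)
          (by grind)
        grind
      grind
  obtain ⟨m, hm⟩ := h.odd
  have k1 := (key (m+1)).2.1
  have k2 := h.per (p - 2 * ((m+1 : ℕ) : ℤ) + 1)
  have e : p - 2 * ((m+1 : ℕ) : ℤ) + 1 + n = p := by rw [hm]; push_cast; ring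
  rw [e] at k2
  grind

theorem N1 {n : ℕ} {y : ℤ → Bool} (h : St n y) (a : ℤ) (hE : y (a-1) = y (a-2)) (h0 : y a = true)
    (h1 : y (a+1) = false) (h2 : y (a+2) = false) (h3 : y (a+3) = true) :
    y (a+4) = true ∧ y (a+5) = false ∧ y (a+6) = true := by
  by_contra hc
  have hL : LS y (a+2) = true := by grind [LS, lsw]
  have c3 : ¬ (y (a+4) = false ∧ y (a+5) = true ∧ y (a+6) = false) := by
    rintro ⟨c1, c2, c3⟩
    exact N3 h (a+1) (by grind) (by grind) (by grind) (by grind) (by grind) (by grind)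
  have hD : DS y (a+2) = 0 := by grind [DS, disp]
  have h4 := h.tr0 _ hL
  rw [hD] at h4
  have h5 : step y (a+2) = true := by grind [step, loc, act]
  grind [LS, lsw]

theorem zero_stay {y : ℤ → Bool} (i : ℤ) (h0 : y i = false) (h1 : y (i-1) = false)
    (h2 : y (i-2) = false) : step y i = false := by
  grind [step, loc, act]

theorem one_stay {y : ℤ → Bool} (i : ℤ) (h0 : y i = true) (h1 : y (i-1) = true)
    (h2 : y (i+1) = true) (h3 : y (i+2) = true) : step y i = true := by
  grind [step, loc, act]

theorem leftE {y : ℤ → Bool} (a l : ℤ) (hE : y (a-1) = y (a-2)) (h0 : y a = true)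
    (hal : a + 2 ≤ l) (hz : ∀ i, a < i → i ≤ l → y i = false) :
    step y a = true ∧ step y (a+1) = true ∧ step y (a+2) = true ∧
    ∀ i, a + 2 < i → i ≤ l → step y i = false := by
  have h1 := hz (a+1) (by omega) (by omega)
  have h2 := hz (a+2) (by omega) (by omega)
  refine ⟨by grind [step, loc, act], by grind [step, loc, act], by grind [step, loc, act], ?_⟩
  intro i hi hi'
  exact zero_stay i (hz _ (by omega) (by omega)) (hz _ (by omega) (by omega))
    (hz _ (by omega) (by omega))

theorem leftC {n : ℕ} {y : ℤ → Bool} (h : St n y) (a l : ℤ) (hE : y (a-1) ≠ y (a-2))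
    (h0 : y a = true) (hal : a + 2 ≤ l) (hz : ∀ i, a < i → i ≤ l → y i = false) :
    (step y (a-2) = true ∧ ∀ i, a - 2 < i → i ≤ l → step y i = false) ∨
    (step y a = true ∧ (∀ i, a < i → i ≤ l → step y i = false) ∧
      step y (a-1) = step y (a-2)) := by
  have h1 := hz (a+1) (by omega) (by omega)
  have h2 := hz (a+2) (by omega) (by omega)
  have c1 : ¬ (y (a-2) = false ∧ y (a-1) = true) := by
    rintro ⟨c1, c2⟩
    have := N2 h (a-2) (by grind) (by grind) (by grind) (by grind)
    grind
  have d1 : y (a-1) = false := by grind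
  have d2 : y (a-2) = true := by grind
  have f1 : step y (a+1) = false := by grind [step, loc, act]
  have f2 : step y (a+2) = false := by grind [step, loc, act]
  have f3 : ∀ i, a < i → i ≤ l → step y i = false := by
    intro i hi hi'
    by_cases e1 : i = a + 1
    · rw [e1]; exact f1
    by_cases e2 : i = a + 2
    · rw [e2]; exact f2
    exact zero_stay i (hz _ (by omega) (by omega)) (hz _ (by omega) (by omega))
      (hz _ (by omega) (by omega))
  by_cases d3 : y (a-3) = true
  · by_cases d4 : y (a-4) = true
    · left
      have f4 : step y a = false := by grind [step, loc, act]
      have f5 : step y (a-1) = false := by grind [step, loc, act]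
      have f6 : step y (a-2) = true := by grind [step, loc, act]
      refine ⟨f6, ?_⟩
      intro i hi hi'
      by_cases e1 : i = a - 1
      · rw [e1]; exact f5
      by_cases e2 : i = a
      · rw [e2]; exact f4
      exact f3 i (by omega) hi'
    · right
      have f4 : step y a = true := by grind [step, loc, act]
      have f5 : step y (a-1) = false := by grind [step, loc, act]
      have f6 : step y (a-2) = false := by grind [step, loc, act]
      exact ⟨f4, f3, by rw [f5, f6]⟩
  · have d4 : y (a-4) = true := by
      by_contra d4
      exact N3 h (a-4) (by grind) (by grind) (by grind) (by grind) (by grind) (by grind)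
    have c2 : ¬ (y (a-6) = false ∧ y (a-5) = false) := by
      rintro ⟨c1, c2⟩
      exact N3 h (a-6) (by grind) (by grind) (by grind) (by grind) (by grind) (by grind)
    have c3 : ¬ (y (a-6) = false ∧ y (a-5) = true) := by
      rintro ⟨c1, c2⟩
      have := N2 h (a-6) (by grind) (by grind) (by grind) (by grind)
      grind
    have c4 : ¬ (y (a-6) = true ∧ y (a-5) = false) := by
      rintro ⟨c1, c2⟩
      have := N5 h (a-6) (by grind) (by grind) (by grind) (by grind) (by grind)
      grind
    right
    have f4 : step y a = true := by grind [step, loc, act]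
    have f5 : step y (a-1) = false := by grind [step, loc, act]
    have f6 : step y (a-2) = false := by grind [step, loc, act]
    exact ⟨f4, f3, by rw [f5, f6]⟩

theorem right_big {n : ℕ} {y : ℤ → Bool} (h : St n y) (l b : ℤ) (hl : step y (l+1) = true)
    (hlb : l + 3 ≤ b) (ho : ∀ i, l < i → i ≤ b → y i = true) (hb : y (b+1) = false) :
    (y (b+2) = false ∧ (∀ i, l < i → i ≤ b + 2 → step y i = true) ∧ step y (b+3) = false) ∨
    (y (b+2) = true ∧ (∀ i, l < i → i ≤ b - 2 → step y i = true) ∧ step y (b-1) = false) := by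
  have h0 := ho b (by omega) (by omega)
  have h1 := ho (b-1) (by omega) (by omega)
  have h2 := ho (b-2) (by omega) (by omega)
  have f0 : ∀ i, l < i → i ≤ b - 2 → step y i = true := by
    intro i hi hi'
    by_cases e1 : i = l + 1
    · rw [e1]; exact hl
    exact one_stay i (ho _ (by omega) (by omega)) (ho _ (by omega) (by omega))
      (ho _ (by omega) (by omega)) (ho _ (by omega) (by omega))
  by_cases h3 : y (b+2) = true
  · right
    exact ⟨h3, f0, by grind [step, loc, act]⟩
  · left
    have f1 : step y (b-1) = true := by grind [step, loc, act]
    have f2 : step y b = true := by grind [step, loc, act]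
    have f3 : step y (b+1) = true := by grind [step, loc, act]
    have f4 : step y (b+2) = true := by grind [step, loc, act]
    have f5 : step y (b+3) = false := by
      by_cases h4 : y (b+3) = true
      · have := N1 h b (by grind) h0 hb (by grind) h4
        grind [step, loc, act]
      · grind [step, loc, act]
    refine ⟨by grind, ?_, f5⟩
    intro i hi hi'
    by_cases e1 : i = b - 1
    · rw [e1]; exact f1
    by_cases e2 : i = b
    · rw [e2]; exact f2
    by_cases e3 : i = b + 1
    · rw [e3]; exact f3
    by_cases e4 : i = b + 2
    · rw [e4]; exact f4
    exact f0 i hi (by omega)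

end BFO

namespace BFO

/-- An even run of zeros `(a, l]` followed by an odd run of ones `(l, b]`. -/
structure GG (y : ℤ → Bool) (a l b : ℤ) : Prop where
  ya : y a = true
  al : a + 2 ≤ l
  pal : (l - a) % 2 = 0
  z : ∀ i, a < i → i ≤ l → y i = false
  lb : l + 1 ≤ b
  plb : (b - l) % 2 = 1
  o : ∀ i, l < i → i ≤ b → y i = true
  yb : y (b + 1) = false

/-- An odd run of zeros `(a, l]` followed by an even run of ones `(l, b]`. -/
structure HH (y : ℤ → Bool) (a l b : ℤ) : Prop where
  ya : y a = true
  al : a + 1 ≤ l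
  pal : (l - a) % 2 = 1
  z : ∀ i, a < i → i ≤ l → y i = false
  lb : l + 2 ≤ b
  plb : (b - l) % 2 = 0
  o : ∀ i, l < i → i ≤ b → y i = true
  yb : y (b + 1) = false

theorem rightG {n : ℕ} {y : ℤ → Bool} (h : St n y) {a l b : ℤ} (g : GG y a l b) :
    ∃ b', l + 1 ≤ b' ∧ (b' - l) % 2 = 1 ∧ (∀ i, l < i → i ≤ b' → step y i = true) ∧
      step y (b' + 1) = false := by
  obtain ⟨ya, al, pal, z, lb, plb, o, yb⟩ := g
  have z0 := z l (by omega) (by omega)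
  have z1 := z (l-1) (by omega) (by omega)
  have o1 := o (l+1) (by omega) (by omega)
  by_cases hb : b = l + 1
  · subst hb
    have yb' : y (l+2) = false := by grind
    by_cases h3 : y (l+3) = true
    · have h4 : y (l+4) = true := by
        by_contra h4
        exact N3 h (l-1) (by grind) (by grind) (by grind) (by grind) (by grind) (by grind)
      refine ⟨l+1, by omega, by omega, ?_, by grind [step, loc, act]⟩
      intro i hi hi'
      have : i = l + 1 := by omega
      subst this
      grind [step, loc, act]
    · refine ⟨l+3, by omega, by omega, ?_, ?_⟩
      · intro i hi hi'
        have : i = l + 1 ∨ i = l + 2 ∨ i = l + 3 := by omega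
        rcases this with rfl | rfl | rfl <;> grind [step, loc, act]
      · by_cases h4 : y (l+4) = true
        · have := N1 h (l+1) (by grind) o1 yb (by grind) (by grind)
          grind [step, loc, act]
        · grind [step, loc, act]
  · have o2 := o (l+2) (by omega) (by omega)
    have o3 := o (l+3) (by omega) (by omega)
    rcases right_big h l b (by grind [step, loc, act]) (by omega) o yb with ⟨h1, h2, h3⟩ | ⟨h1, h2, h3⟩
    · exact ⟨b+2, by omega, by omega, h2, by grind⟩
    · exact ⟨b-2, by omega, by omega, h2, by grind⟩

theorem noG_E (N : ℕ) : ∀ {n : ℕ} {y : ℤ → Bool} (_ : St n y) {a l b : ℤ} (_ : GG y a l b)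
    (_ : y (a-1) = y (a-2)) (_ : l - a ≤ N), False := by
  induction N with
  | zero => intro n y h a l b g hE hN; have := g.al; omega
  | succ N ih =>
    intro n y h a l b g hE hN
    obtain ⟨b', r1, r2, r3, r4⟩ := rightG h g
    obtain ⟨ya, al, pal, z, lb, plb, o, yb⟩ := g
    obtain ⟨e1, e2, e3, e4⟩ := leftE a l hE ya al z
    by_cases hl : l = a + 2
    · subst hl
      have := N1 h a hE ya (z _ (by omega) (by omega)) (z _ (by omega) (by omega))
        (by have := o (a+3) (by omega) (by omega); exact this)
      by_cases hb : b = a + 3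
      · subst hb; grind
      · have := o (a+5) (by omega) (by omega)
        grind
    · exact ih h.next (a := a+2) (l := l) (b := b') ⟨e3, by omega, by omega, e4, r1, r2, r3, r4⟩
        (by grind) (by omega)

theorem noG_aux (N : ℕ) : ∀ {n : ℕ} {y : ℤ → Bool} (_ : St n y) {a l b : ℤ} (_ : GG y a l b)
    (_ : n - (l - a) ≤ N), False := by
  induction N with
  | zero =>
    intro n y h a l b g hN
    have h1 := h.per (l + 1 - n)
    have h2 := g.z (l + 1 - n) (by have := g.al; omega) (by
      have : 0 < n := h.odd.pos
      omega)
    have h3 := g.o (l+1) (by omega) (by have := g.lb; omega)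
    grind
  | succ N ih =>
    intro n y h a l b g hN
    by_cases hE : y (a-1) = y (a-2)
    · exact noG_E (l - a).toNat h g hE (by omega)
    obtain ⟨b', r1, r2, r3, r4⟩ := rightG h g
    obtain ⟨ya, al, pal, z, lb, plb, o, yb⟩ := g
    rcases leftC h a l hE ya al z with ⟨c1, c2⟩ | ⟨c1, c2, c3⟩
    · exact ih h.next (a := a-2) (l := l) (b := b')
        ⟨c1, by omega, by omega, c2, r1, r2, r3, r4⟩ (by omega)
    · exact noG_E (l - a).toNat h.next (a := a) (l := l) (b := b')
        ⟨c1, by omega, by omega, c2, r1, r2, r3, r4⟩ c3 (by omega)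

theorem noG {n : ℕ} {y : ℤ → Bool} (h : St n y) {a l b : ℤ} (g : GG y a l b) : False :=
  noG_aux (n - (l - a)).toNat h g (by omega)

/-- Evolution of the left end of an odd zero run of length at least three. -/
theorem left_odd {n : ℕ} {y : ℤ → Bool} (h : St n y) {a l b : ℤ} (g : HH y a l b)
    (hal : a + 2 ≤ l) : ∃ a', a' + 1 ≤ l ∧ (l - a') % 2 = 1 ∧ step y a' = true ∧
      ∀ i, a' < i → i ≤ l → step y i = false := by
  obtain ⟨ya, al, pal, z, lb, plb, o, yb⟩ := g
  by_cases hE : y (a-1) = y (a-2)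
  · obtain ⟨e1, e2, e3, e4⟩ := leftE a l hE ya hal z
    exact ⟨a+2, by omega, by omega, e3, e4⟩
  · rcases leftC h a l hE ya hal z with ⟨c1, c2⟩ | ⟨c1, c2, c3⟩
    · exact ⟨a-2, by omega, by omega, c1, c2⟩
    · exact ⟨a, by omega, by omega, c1, c2⟩

/-- What precedes a zero run of length one. -/
theorem left_one {n : ℕ} {y : ℤ → Bool} (h : St n y) {a : ℤ} (h0 : y a = true)
    (h1 : y (a+1) = false) (h2 : y (a+2) = true) (h3 : y (a+3) = true) :
    y (a-1) = y (a-2) := by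
  have c1 : ¬ (y (a-2) = false ∧ y (a-1) = true) := by
    rintro ⟨c1, c2⟩
    have := N2 h (a-2) (by grind) (by grind) (by grind) (by grind)
    grind
  have c2 : ¬ (y (a-2) = true ∧ y (a-1) = false) := by
    rintro ⟨c1, c2⟩
    have := N5 h (a-2) (by grind) (by grind) (by grind) (by grind) (by grind)
    grind
  grind

theorem H_end {n : ℕ} {y : ℤ → Bool} (h : St n y) {a l : ℤ} (g : HH y a l (l+2)) : False := by
  have o1 := g.o (l+1) (by omega) (by omega)
  have o2 := g.o (l+2) (by omega) (by omega)
  have z0 := g.z l (by have := g.al; omega) (by omega)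
  have yb : y (l+3) = false := by have := g.yb; grind
  obtain ⟨h4, h5, h6⟩ := N2 h l z0 o1 o2 yb
  have f1 : step y (l+1) = false := by grind [step, loc, act]
  have f2 : step y (l+2) = false := by grind [step, loc, act]
  have f3 : step y (l+3) = false := by grind [step, loc, act]
  have f4 : step y (l+4) = true := by grind [step, loc, act]
  have f5 : step y (l+5) = false := by grind [step, loc, act]
  have key : ∃ a', a' + 1 ≤ l ∧ (l - a') % 2 = 1 ∧ step y a' = true ∧
      ∀ i, a' < i → i ≤ l → step y i = false := by
    by_cases hal : a + 2 ≤ l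
    · exact left_odd h g hal
    have e : l = a + 1 := by have := g.al; omega
    subst e
    have ya := g.ya
    have hE := left_one h ya z0 (by grind) (by grind)
    by_cases k1 : y (a-1) = true
    · have t0 : step y a = false := by grind [step, loc, act]
      have t1 : step y (a-1) = false := by grind [step, loc, act]
      have t3 : step y (a+1) = false := by grind [step, loc, act]
      have t2 : step y (a-2) = true := by
        by_contra t2
        have c : y (a-3) = false ∧ y (a-4) = true ∧ y (a-5) = true ∧ y (a-6) = true := by
          grind [step, loc, act]
        have hL : LS y (a-3) = true := by grind [LS, lsw]
        have hD : DS y (a-3) = 2 := by grind [DS, disp]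
        have := h.tr0 _ hL
        rw [hD] at this
        grind [LS, lsw]
      refine ⟨a-2, by omega, by omega, t2, ?_⟩
      intro i hi hi'
      have : i = a - 1 ∨ i = a ∨ i = a + 1 := by omega
      rcases this with rfl | rfl | rfl <;> assumption
    · refine ⟨a, by omega, by omega, by grind [step, loc, act], ?_⟩
      intro i hi hi'
      have : i = a + 1 := by omega
      subst this
      grind [step, loc, act]
  obtain ⟨a', k1, k2, k3, k4⟩ := key
  refine noG h.next (a := a') (l := l+3) (b := l+4)
    ⟨k3, by omega, by omega, ?_, by omega, by omega, ?_, by grind⟩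
  · intro i hi hi'
    by_cases hil : i ≤ l
    · exact k4 i hi hil
    have : i = l + 1 ∨ i = l + 2 ∨ i = l + 3 := by omega
    rcases this with rfl | rfl | rfl <;> assumption
  · intro i hi hi'
    have : i = l + 4 := by omega
    subst this
    exact f4

theorem H_step {n : ℕ} {y : ℤ → Bool} (h : St n y) {a l b : ℤ} (g : HH y a l b)
    (hb : l + 4 ≤ b) : step y (l+1) = true ∧ ∃ a', a' + 1 ≤ l ∧ (l - a') % 2 = 1 ∧
      step y a' = true ∧ ∀ i, a' < i → i ≤ l → step y i = false := by
  have o1 := g.o (l+1) (by omega) (by omega)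
  have o2 := g.o (l+2) (by omega) (by omega)
  have o3 := g.o (l+3) (by omega) (by omega)
  have o4 := g.o (l+4) (by omega) (by omega)
  have z0 := g.z l (by have := g.al; omega) (by omega)
  by_cases hal : a + 2 ≤ l
  · have z1 := g.z (l-1) (by have := g.pal; omega) (by omega)
    exact ⟨by grind [step, loc, act], left_odd h g hal⟩
  have e : l = a + 1 := by have := g.al; omega
  subst e
  have ya := g.ya
  have hE := left_one h ya z0 (by grind) (by grind)
  by_cases k1 : y (a-1) = true
  · exfalso
    have t0 : step y a = true := by grind [step, loc, act]
    have t1 : step y (a+1) = false := by grind [step, loc, act]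
    have t2 : step y (a+2) = false := by grind [step, loc, act]
    have t3 : step y (a+3) = true := by grind [step, loc, act]
    have plb := g.plb
    have z' : ∀ i, a < i → i ≤ a + 2 → step y i = false := by
      intro i hi hi'
      have : i = a + 1 ∨ i = a + 2 := by omega
      rcases this with rfl | rfl <;> assumption
    rcases right_big h (a+2) b (by grind) (by omega) (fun i hi hi' => g.o i (by omega) hi') g.yb
      with ⟨h1, h2, h3⟩ | ⟨h1, h2, h3⟩
    · exact noG h.next (a := a) (l := a+2) (b := b+2)
        ⟨t0, by omega, by omega, z', by omega, by omega, h2, by grind⟩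
    · exact noG h.next (a := a) (l := a+2) (b := b-2)
        ⟨t0, by omega, by omega, z', by omega, by omega, h2, by grind⟩
  · refine ⟨by grind [step, loc, act], a, by omega, by omega, by grind [step, loc, act], ?_⟩
    intro i hi hi'
    have : i = a + 1 := by omega
    subst this
    grind [step, loc, act]

theorem noH_hit (N : ℕ) : ∀ {n : ℕ} {y : ℤ → Bool} (_ : St n y) {a l b : ℤ} (_ : HH y a l b)
    (_ : y (b+2) = true) (_ : b - l ≤ N), False := by
  induction N with
  | zero => intro n y h a l b g hh hN; have := g.lb; omega
  | succ N ih =>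
    intro n y h a l b g hh hN
    have plb := g.plb
    have lb := g.lb
    by_cases hb : b = l + 2
    · subst hb; exact H_end h g
    obtain ⟨s1, a', s2, s3, s4, s5⟩ := H_step h g (by omega)
    rcases right_big h l b s1 (by omega) g.o g.yb with ⟨h1, h2, h3⟩ | ⟨h1, h2, h3⟩
    · grind
    have o0 := g.o b (by omega) (by omega)
    have o1 := g.o (b-1) (by omega) (by omega)
    have o2 := g.o (b-2) (by omega) (by omega)
    have yb := g.yb
    have q2 := h2 (b-2) (by omega) (by omega)
    by_cases hs : step y b = true
    · exact ih h.next (a := a') (l := l) (b := b-2)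
        ⟨s4, s2, s3, s5, by omega, by omega, h2, by grind⟩ (by grind) (by omega)
    · have c : y (b+3) = true ∧ y (b+4) = false := by grind [step, loc, act]
      obtain ⟨c3, c4⟩ := c
      have c5 := N2 h (b+1) yb (by grind) (by grind) (by grind)
      obtain ⟨c5, c6, c7⟩ := c5
      have t0 : step y b = false := by grind
      have t1 : step y (b+1) = false := by grind [step, loc, act]
      have t2 : step y (b+2) = false := by grind [step, loc, act]
      have t3 : step y (b+3) = false := by grind [step, loc, act]
      have t4 : step y (b+4) = false := by grind [step, loc, act]
      have t5 : step y (b+5) = true := by grind [step, loc, act]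
      have t6 : step y (b+6) = false := by grind [step, loc, act]
      refine noG h.next (a := b-2) (l := b+4) (b := b+5)
        ⟨q2, by omega, by omega, ?_, by omega, by omega, ?_, by grind⟩
      · intro i hi hi'
        have : i = b - 1 ∨ i = b ∨ i = b + 1 ∨ i = b + 2 ∨ i = b + 3 ∨ i = b + 4 := by omega
        rcases this with rfl | rfl | rfl | rfl | rfl | rfl <;> assumption
      · intro i hi hi'
        have : i = b + 5 := by omega
        subst this
        exact t5

theorem noH_aux (N : ℕ) : ∀ {n : ℕ} {y : ℤ → Bool} (_ : St n y) {a l b : ℤ} (_ : HH y a l b)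
    (_ : n - (b - l) ≤ N), False := by
  induction N with
  | zero =>
    intro n y h a l b g hN
    have h1 := h.per l
    have h2 := g.o (l + n) (by
      have : 0 < n := h.odd.pos
      omega) (by omega)
    have h3 := g.z l (by have := g.al; omega) (by omega)
    grind
  | succ N ih =>
    intro n y h a l b g hN
    have plb := g.plb
    have lb := g.lb
    by_cases hh : y (b+2) = true
    · exact noH_hit (b - l).toNat h g hh (by omega)
    by_cases hb : b = l + 2
    · subst hb; exact H_end h g
    obtain ⟨s1, a', s2, s3, s4, s5⟩ := H_step h g (by omega)
    rcases right_big h l b s1 (by omega) g.o g.yb with ⟨h1, h2, h3⟩ | ⟨h1, h2, h3⟩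
    · exact ih h.next (a := a') (l := l) (b := b+2)
        ⟨s4, s2, s3, s5, by omega, by omega, h2, by grind⟩ (by omega)
    · exact hh h1

theorem noH {n : ℕ} {y : ℤ → Bool} (h : St n y) {a l b : ℤ} (g : HH y a l b) : False :=
  noH_aux (n - (b - l)).toNat h g (by omega)

theorem per_mul {n : ℕ} {y : ℤ → Bool} (h : ∀ i, y (i + n) = y i) (i : ℤ) (k : ℕ) :
    y (i + k * n) = y i := by
  induction k with
  | zero => simp
  | succ k ih =>
    rw [← ih, ← h (i + k * n)]; congr 1; push_cast; ring

/-- A stable configuration is homogeneous. -/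
theorem homog {n : ℕ} {y : ℤ → Bool} (h : St n y) : ∀ i j, y i = true → y j = true := by
  classical
  intro i j hi
  by_contra hj
  have hn : 0 < n := h.odd.pos
  have hs : ∃ p, y (p-1) = true ∧ y p = false := by
    by_contra hc
    push Not at hc
    have up : ∀ k : ℕ, y (i + k) = true := by
      intro k
      induction k with
      | zero => simpa using hi
      | succ k ih =>
        have := hc (i + k + 1) (by simpa using ih)
        push_cast
        rw [← add_assoc]
        simpa using this
    have h1 := per_mul h.per j (i - j).natAbs
    have h2 := up (j + (i - j).natAbs * n - i).toNat
    have h3 : i ≤ j + (i - j).natAbs * n := by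
      have : ((i - j).natAbs : ℤ) * 1 ≤ (i - j).natAbs * n :=
        mul_le_mul_of_nonneg_left (by exact_mod_cast hn) (by positivity)
      omega
    rw [Int.toNat_of_nonneg (by omega)] at h2
    rw [add_sub_cancel, h1] at h2
    exact hj h2
  obtain ⟨p₀, hp1, hp2⟩ := hs
  have hex : ∃ d : ℕ, d % 2 = 1 ∧ ∃ p, y (p-1) = true ∧ y p = false ∧ y (p+d-1) = true ∧
      y (p+d) = false := by
    refine ⟨n, Nat.odd_iff.1 h.odd, p₀, hp1, hp2, ?_, ?_⟩
    · rw [← hp1, ← h.per (p₀ - 1)]; congr 1; ring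
    · rw [← hp2, ← h.per p₀]
  have hmin := fun m => Nat.find_min hex (m := m)
  obtain ⟨hd, p, q1, q2, q3, q4⟩ := Nat.find_spec hex
  generalize Nat.find hex = d at hmin hd q3 q4
  have nostart : ∀ i, p < i → i < p + d → y (i-1) = true → y i = true := by
    intro i i1 i2 i3
    by_contra i4
    have i4 : y i = false := by simpa using i4
    by_cases par : (i - p) % 2 = 1
    · refine hmin (i - p).toNat (by omega) ⟨by omega, p, q1, q2, ?_, ?_⟩
      · rw [Int.toNat_of_nonneg (by omega), add_sub_cancel]; exact i3
      · rw [Int.toNat_of_nonneg (by omega), add_sub_cancel]; exact i4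
    · refine hmin (p + d - i).toNat (by omega) ⟨by omega, i, i3, i4, ?_, ?_⟩
      · rw [Int.toNat_of_nonneg (by omega), add_sub_cancel]; exact q3
      · rw [Int.toNat_of_nonneg (by omega), add_sub_cancel]; exact q4
  have hex2 : ∃ j : ℕ, y (p + j) = true := by
    refine ⟨d - 1, ?_⟩
    rw [← q3]; congr 1; omega
  have jmin := fun m => Nat.find_min hex2 (m := m)
  have jspec := Nat.find_spec hex2
  have jle : Nat.find hex2 ≤ d - 1 := Nat.find_min' hex2 (by rw [← q3]; congr 1; omega)
  generalize Nat.find hex2 = j at jmin jspec jle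
  have jpos : j ≠ 0 := by
    rintro rfl
    simp [q2] at jspec
  have z : ∀ i, p - 1 < i → i ≤ p + j - 1 → y i = false := by
    intro i i1 i2
    have := jmin (i - p).toNat (by omega)
    rw [Int.toNat_of_nonneg (by omega), add_sub_cancel] at this
    simpa using this
  have o' : ∀ k : ℕ, p + j + k ≤ p + d - 1 → y (p + j + k) = true := by
    intro k
    induction k with
    | zero => intro _; simpa using jspec
    | succ k ih =>
      intro hk
      push_cast at hk
      refine nostart _ (by omega) (by push_cast; omega) ?_
      rw [← ih (by omega)]
      congr 1; push_cast; ring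
  have o : ∀ i, p + j - 1 < i → i ≤ p + d - 1 → y i = true := by
    intro i i1 i2
    have := o' (i - (p + j)).toNat (by omega)
    rw [Int.toNat_of_nonneg (by omega), add_sub_cancel] at this
    exact this
  by_cases par : j % 2 = 0
  · exact noG h (a := p-1) (l := p+j-1) (b := p+d-1)
      ⟨q1, by omega, by omega, z, by omega, by omega, o, by simpa using q4⟩
  · exact noH h (a := p-1) (l := p+j-1) (b := p+d-1)
      ⟨q1, by omega, by omega, z, by omega, by omega, o, by simpa using q4⟩

theorem step_const (n : ℕ) (c : Bool) : step (fun _ : ZMod n => c) = fun _ => c := by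
  funext i
  cases c <;> simp [step, loc, act]

theorem kount_stable {n : ℕ} [NeZero n] (x : ZMod n → Bool) :
    ∃ T, ∀ t, kount (step^[T+t] x) = kount (step^[T] x) := by
  have hanti : Antitone (fun t => kount (step^[t] x)) := by
    refine antitone_nat_of_succ_le ?_
    intro t
    rw [Function.iterate_succ_apply']
    exact kount_le _
  refine ⟨Function.argmin (fun t => kount (step^[t] x)), fun t => ?_⟩
  exact le_antisymm (hanti (Nat.le_add_right _ _))
    (Function.argmin_le (fun t => kount (step^[t] x)) _)

theorem main {n : ℕ} [NeZero n] (hn : Odd n) (x : ZMod n → Bool) :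
    ∃ T, ∃ c : Bool, step^[T] x = fun _ => c := by
  obtain ⟨T, hT⟩ := kount_stable x
  refine ⟨T, ?_⟩
  have hc : ∀ (z : ZMod n → Bool) (t : ℕ), step^[t] (fun i : ℤ => z (i : ZMod n)) =
      fun i : ℤ => (step^[t] z) (i : ZMod n) := by
    intro z t
    induction t with
    | zero => rfl
    | succ t ih =>
      rw [Function.iterate_succ_apply', ih, Function.iterate_succ_apply']
      funext i
      simpa using step_shift (step^[t] z) 0 i
  have hst : St n (fun i : ℤ => (step^[T] x) (i : ZMod n)) := by
    refine ⟨hn, fun i => by simp, ?_⟩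
    intro t q hq
    rw [hc] at hq ⊢
    rw [hc]
    have e1 := LS_shift (step^[t] (step^[T] x)) 0 q
    have e2 := DS_shift (step^[t] (step^[T] x)) 0 q
    simp only [zero_add] at e1 e2
    rw [e2]
    have e3 := LS_shift (step^[t+1] (step^[T] x)) 0
      (q + (DS (step^[t] (step^[T] x)) (q : ZMod n) : ℤ))
    simp only [zero_add] at e3
    rw [e1] at hq
    rw [e3]
    by_contra hcon
    have := kount_lt _ _ hq (by
      rw [Function.iterate_succ_apply'] at hcon
      push_cast at hcon
      exact hcon)
    rw [← Function.iterate_succ_apply' step t, ← Function.iterate_add_apply, ← Function.iterate_add_apply,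
      add_comm _ T, add_comm _ T, hT, hT] at this
    exact lt_irrefl _ this
  have hh := homog hst
  by_cases h1 : ∃ i, (step^[T] x) i = true
  · obtain ⟨i, hi⟩ := h1
    refine ⟨true, ?_⟩
    funext j
    obtain ⟨i', rfl⟩ := ZMod.intCast_surjective i
    obtain ⟨j', rfl⟩ := ZMod.intCast_surjective j
    exact hh i' j' hi
  · push Not at h1
    exact ⟨false, funext fun j => by simpa using h1 j⟩

theorem Par_iter {n : ℕ} [NeZero n] (x : ZMod n → Bool) (t : ℕ) : Par (step^[t] x) = Par x := by
  induction t with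
  | zero => rfl
  | succ t ih => rw [Function.iterate_succ_apply', Par_step, ih]

end BFO

/-- The corrected BFO rule solves the parity problem. -/
theorem bfo_solves_parity (n : ℕ) [NeZero n] (hn : Odd n) (x : ZMod n → Bool) :
    ∃ t₀ : ℕ, ∀ t : ℕ, t₀ ≤ t →
      (Par x = 1 → bfoGlobal^[t] x = fun _ => true) ∧
      (Par x = 0 → bfoGlobal^[t] x = fun _ => false) := by
  have hb : (bfoGlobal : (ZMod n → Bool) → ZMod n → Bool) = BFO.step :=
    funext BFO.bfoGlobal_eq
  rw [hb]
  obtain ⟨T, c, hc⟩ := BFO.main hn x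
  refine ⟨T, fun t ht => ?_⟩
  have h1 : BFO.step^[t] x = fun _ => c := by
    obtain ⟨k, rfl⟩ := Nat.exists_eq_add_of_le ht
    rw [add_comm, Function.iterate_add_apply, hc]
    exact Function.iterate_fixed (BFO.step_const n c) k
  have h2 := BFO.Par_iter x t
  rw [h1] at h2 ⊢
  have hn1 : (n : ZMod 2) = 1 := (ZMod.natCast_eq_one_iff_odd).2 hn
  cases c
  · have : Par x = 0 := by rw [← h2]; simp [Par]
    refine ⟨fun h => ?_, fun _ => rfl⟩
    rw [this] at h
    exact absurd h (by decide)
  · have : Par x = 1 := by rw [← h2]; simp [Par, ZMod.card, hn1]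
    refine ⟨fun _ => rfl, fun h => ?_⟩
    rw [this] at h
    exact absurd h (by decide)
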